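/- Let k be a field, n ≥ 1, and let μ_1, …, μ_s be positive integers with μ_1 + … + μ_s = n; put m_i = μ_1 + … + μ_i, and for t ≥ 1 set λ_t = #{ i : μ_i ≥ t }. Let W_i ⊆ k^n be the span of the first m_i standard basis vectors. Suppose N and N' are nilpotent endomorphisms of k^n such that dim_k ker(N^j) = dim_k ker(N'^j) = Σ_{t ≥ 1} min(λ_t, j) for every j ≥ 0, and such that N(W_i) ⊆ W_{i−1} and N'(W_i) ⊆ W_{i−1} for all 1 ≤ i ≤ s (with W_0 = 0). Then there exists an invertible linear automorphism g of k^n with g(W_i) = W_i for all i and N' = g ∘ N ∘ g^{−1}. -/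

import Mathlib

/-!
Strict compatibility with a flag with `r` nonzero graded pieces forces `N ^ r = 0`, and the
dimensions of the kernels forbid `N ^ (r - 1) = 0`. Choose `v` with `N ^ (r - 1) v ≠ 0` and a
linear form `φ` which is `1` on `N ^ (r - 1) v` and `0` on the rest of the chain `v, N v, …`. The
retraction `x ↦ (φ x, φ (N x), …, φ (N ^ (r - 1) x))` onto this chain splits off a Jordan block of
length `r`, and it respects every step `W i` of the flag: if `a` of the first `i` graded pieces
are nonzero, then `W i` is killed by `N ^ a` and contains the image of `N ^ (r - a)`. On the
complement `N` is again a Richardson nilpotent, for the type in which every positive part of `μ`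
is lowered by one, that is, for the diagram with its first column removed. Induction conjugates
the complements of `N` and `N'`, and gluing this with the evident isomorphism of the two Jordan
blocks gives `g`.
-/

open Finset Module

section Splitting

variable {R A M M' : Type*} [Ring R] [AddCommGroup A] [Module R A]
  [AddCommGroup M] [Module R M] [AddCommGroup M'] [Module R M']
  {p' : M' →ₗ[R] A} {i' : A →ₗ[R] M'} {p : M →ₗ[R] A} {i : A →ₗ[R] M}

/-- The splitting of `M` as `ker p × A` given by a section `i` of `p : M → A`. -/
def equivKerProd (h : p ∘ₗ i = .id) : M ≃ₗ[R] LinearMap.ker p × A :=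
  have hpi (a : A) : p (i a) = a := LinearMap.congr_fun h a
  .ofLinearMap
    (((LinearMap.id - i ∘ₗ p).codRestrict (LinearMap.ker p) fun x => by simp [hpi]).prod p)
    ((LinearMap.ker p).subtype.coprod i)
    (LinearMap.ext fun y => by ext <;> simp [hpi])
    (LinearMap.ext fun x => by simp)

/-- The isomorphism `M ≃ M'` which extends an isomorphism of the kernels of two split surjections
onto `A` and carries the one section to the other. -/
def glueKer (h : p ∘ₗ i = .id) (h' : p' ∘ₗ i' = .id)
    (e : LinearMap.ker p ≃ₗ[R] LinearMap.ker p') : M ≃ₗ[R] M' :=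
  equivKerProd h ≪≫ₗ e.prodCongr (.refl R A) ≪≫ₗ (equivKerProd h').symm

theorem coe_equivKerProd_fst (h : p ∘ₗ i = .id) (x : M) :
    ((equivKerProd h x).1 : M) = x - i (p x) := rfl

theorem glueKer_apply (h : p ∘ₗ i = .id) (h' : p' ∘ₗ i' = .id)
    (e : LinearMap.ker p ≃ₗ[R] LinearMap.ker p') (x : M) :
    glueKer h h' e x = e (equivKerProd h x).1 + i' (p x) := rfl

theorem glueKer_mem (h : p ∘ₗ i = .id) (h' : p' ∘ₗ i' = .id)
    {e : LinearMap.ker p ≃ₗ[R] LinearMap.ker p'} {U : Submodule R M} {U' : Submodule R M'}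
    (hU : ∀ x ∈ U, i (p x) ∈ U) (hU' : ∀ x ∈ U, i' (p x) ∈ U')
    (he : ∀ x : LinearMap.ker p, (x : M) ∈ U → (e x : M') ∈ U') {x : M} (hx : x ∈ U) :
    glueKer h h' e x ∈ U' :=
  U'.add_mem (he _ (U.sub_mem hx (hU x hx))) (hU' x hx)

theorem glueKer_comm (h : p ∘ₗ i = .id) (h' : p' ∘ₗ i' = .id)
    {e : LinearMap.ker p ≃ₗ[R] LinearMap.ker p'} {f : End R M} {f' : End R M'}
    (hf : ∀ x ∈ LinearMap.ker p, f x ∈ LinearMap.ker p)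
    (hf' : ∀ x ∈ LinearMap.ker p', f' x ∈ LinearMap.ker p')
    (hip : ∀ x, i (p (f x)) = f (i (p x))) (hip' : ∀ x, i' (p (f x)) = f' (i' (p x)))
    (he : ∀ x, e (f.restrict hf x) = f'.restrict hf' (e x)) (x : M) :
    glueKer h h' e (f x) = f' (glueKer h h' e x) := by
  have hfst : (equivKerProd h (f x)).1 = f.restrict hf (equivKerProd h x).1 :=
    Subtype.ext <| by simp [coe_equivKerProd_fst, hip]
  rw [glueKer_apply, glueKer_apply, hfst, he, hip', map_add, LinearMap.coe_restrict_apply]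

end Splitting

section JordanChain

variable {R M M' : Type*} [Ring R] [AddCommGroup M] [Module R M]
  [AddCommGroup M'] [Module R M'] {r a : ℕ} {N : End R M} {v : M} {φ : Dual R M}

/-- The map `Rʳ → M` sending the basis vectors to the chain `N ^ (r - 1) v, …, N v, v`. -/
def jordanChain (r : ℕ) (N : End R M) (v : M) : (Fin r → R) →ₗ[R] M :=
  Fintype.linearCombination R fun l : Fin r => (N ^ (r - 1 - l : ℕ)) v

/-- The map `M → Rʳ` with coordinates `φ, φ ∘ N, …, φ ∘ N ^ (r - 1)`. -/
def jordanCoord (r : ℕ) (N : End R M) (φ : Dual R M) : M →ₗ[R] Fin r → R :=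
  LinearMap.pi fun l => φ ∘ₗ N ^ (l : ℕ)

/-- `φ` is dual to the last vector of the Jordan chain of `N` of length `r` generated by `v`, and
no Jordan chain of `N` is longer. This makes `jordanCoord r N φ` a retraction
of `jordanChain r N v`. -/
structure IsDualChain (r : ℕ) (N : End R M) (φ : Dual R M) (v : M) : Prop where
  pow_eq_zero : N ^ r = 0
  apply_pow : ∀ j, φ ((N ^ j) v) = if j + 1 = r then 1 else 0

theorem jordanChain_apply (c : Fin r → R) :
    jordanChain r N v c = ∑ l, c l • (N ^ (r - 1 - l : ℕ)) v := rfl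

theorem jordanCoord_apply (x : M) (l : Fin r) : jordanCoord r N φ x l = φ ((N ^ (l : ℕ)) x) := rfl

theorem jordanCoord_mem_spanSubset {x : M} (hx : (N ^ a) x = 0) :
    jordanCoord r N φ x ∈ Pi.spanSubset R {l : Fin r | (l : ℕ) < a} :=
  Pi.mem_spanSubset_iff.2 fun l hl => by
    rw [jordanCoord_apply, End.pow_map_zero_of_le (not_lt.1 hl) hx, map_zero]

theorem jordanChain_mem {U : Submodule R M} (hU : ∀ j, r ≤ j + a → (N ^ j) v ∈ U)
    {c : Fin r → R} (hc : c ∈ Pi.spanSubset R {l : Fin r | (l : ℕ) < a}) :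
    jordanChain r N v c ∈ U := by
  rw [jordanChain_apply]
  refine U.sum_mem fun l _ => ?_
  by_cases hl : (l : ℕ) < a
  · exact U.smul_mem _ (hU _ (by omega))
  · simp [Pi.mem_spanSubset_iff.1 hc l hl]

theorem jordanChain_jordanCoord_apply {N' : End R M'} {v' : M'} (hN : N ^ r = 0)
    (hN' : N' ^ r = 0) (x : M) :
    jordanChain r N' v' (jordanCoord r N φ (N x)) =
      N' (jordanChain r N' v' (jordanCoord r N φ x)) := by
  obtain _ | m := r
  · simp [jordanChain_apply]
  simp only [jordanChain_apply, jordanCoord_apply, map_sum, map_smul, ← End.mul_apply, ← pow_succ,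
    ← pow_succ']
  rw [Fin.sum_univ_castSucc, Fin.sum_univ_succ]
  have hlast : φ ((N ^ (m + 1)) x) = 0 := by simp [hN]
  have hfirst : (N' ^ (m + 1)) v' = 0 := by simp [hN']
  simp only [Fin.val_last, Fin.val_castSucc, Fin.val_zero, Fin.val_succ, add_tsub_cancel_right,
    tsub_zero, hlast, hfirst, zero_smul, smul_zero, add_zero, zero_add]
  refine sum_congr rfl fun l _ => ?_
  rw [show m - (l + 1) + 1 = m - (l : ℕ) by omega]

namespace IsDualChain

theorem jordanCoord_comp_jordanChain (h : IsDualChain r N φ v) :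
    jordanCoord r N φ ∘ₗ jordanChain r N v = .id := by
  refine LinearMap.ext fun c => funext fun l => ?_
  have hdual (m : Fin r) :
      φ ((N ^ (l : ℕ)) ((N ^ (r - 1 - m : ℕ)) v)) = if m = l then 1 else 0 := by
    rw [← End.mul_apply, ← pow_add, h.apply_pow]
    exact if_congr (by rw [Fin.ext_iff]; omega) rfl rfl
  simp [jordanCoord_apply, jordanChain_apply, hdual]

theorem apply_mem_ker_jordanCoord (h : IsDualChain r N φ v) :
    ∀ x ∈ LinearMap.ker (jordanCoord r N φ), N x ∈ LinearMap.ker (jordanCoord r N φ) := by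
  intro x hx
  ext l
  rw [jordanCoord_apply, ← End.mul_apply, ← pow_succ]
  obtain hl | hl := (Nat.succ_le_iff.2 l.2).lt_or_eq
  · exact congrFun hx ⟨l + 1, hl⟩
  · simp [show (l : ℕ) + 1 = r from hl, h.pow_eq_zero]

theorem map_jordanCoord (h : IsDualChain r N φ v) {U : Submodule R M}
    (hU : ∀ x ∈ U, (N ^ a) x = 0) (hv : ∀ j, r ≤ j + a → (N ^ j) v ∈ U) :
    U.map (jordanCoord r N φ) = Pi.spanSubset R {l : Fin r | (l : ℕ) < a} :=
  le_antisymm (Submodule.map_le_iff_le_comap.2 fun x hx => jordanCoord_mem_spanSubset (hU x hx))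
    fun c hc => ⟨_, jordanChain_mem hv hc, LinearMap.congr_fun h.jordanCoord_comp_jordanChain c⟩

end IsDualChain

theorem linearIndependent_pow_apply [IsDomain R] [IsTorsionFree R M] (hr : (N ^ r) v = 0)
    (hv : (N ^ (r - 1)) v ≠ 0) : LinearIndependent R fun j : Fin r => (N ^ (j : ℕ)) v := by
  refine Fintype.linearIndependent_iff.2 fun c hc j => ?_
  induction j using WellFoundedLT.induction with
  | ind j ih =>
    have hj := congrArg (N ^ (r - 1 - j : ℕ)) hc
    simp only [map_sum, map_smul, map_zero, ← End.mul_apply, ← pow_add] at hj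
    rw [sum_eq_single_of_mem j (mem_univ j), show r - 1 - j + j = r - 1 by omega] at hj
    · exact (smul_eq_zero.1 hj).resolve_right hv
    intro i _ hij
    obtain hij | hji := hij.lt_or_gt
    · rw [ih i hij, zero_smul]
    · rw [End.pow_map_zero_of_le (by omega) hr, smul_zero]

end JordanChain

section Field

variable {k V : Type*} [Field k] [AddCommGroup V] [Module k V]

theorem exists_isDualChain {r : ℕ} {N : End k V} (hN : N ^ r = 0) {v : V}
    (hv : (N ^ (r - 1)) v ≠ 0) : ∃ φ, IsDualChain r N φ v := by
  have hr : r ≠ 0 := by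
    rintro rfl
    exact hv (by simpa using LinearMap.congr_fun hN v)
  have hli := linearIndependent_pow_apply (LinearMap.congr_fun hN v) hv
  obtain ⟨f, hf⟩ := LinearMap.exists_leftInverse_of_injective _
    (LinearMap.ker_eq_bot.2 hli.fintypeLinearCombination_injective)
  have hfj (j : Fin r) : f ((N ^ (j : ℕ)) v) = Pi.single j 1 := by
    simpa using LinearMap.congr_fun hf (Pi.single j 1)
  refine ⟨LinearMap.proj ⟨r - 1, by omega⟩ ∘ₗ f, hN, fun j => ?_⟩
  obtain hj | hj := lt_or_ge j r
  · rw [LinearMap.comp_apply, hfj ⟨j, hj⟩, LinearMap.proj_apply, Pi.single_apply]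
    exact if_congr (by rw [Fin.mk.injEq]; omega) rfl rfl
  · rw [pow_eq_zero_of_le hj hN, LinearMap.zero_apply, map_zero, if_neg (by omega)]

theorem finrank_comap_ker_subtype_add_finrank_map {A : Type*} [AddCommGroup A] [Module k A]
    (p : V →ₗ[k] A) (U : Submodule k V) [FiniteDimensional k U] :
    finrank k (U.comap (LinearMap.ker p).subtype) + finrank k (U.map p) = finrank k U := by
  rw [← (p.domRestrict U).finrank_range_add_finrank_ker, LinearMap.range_domRestrict, add_comm,
    LinearMap.ker_domRestrict]
  congr 1
  rw [← Submodule.finrank_map_subtype_eq, Submodule.map_comap_subtype, inf_comm,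
    ← Submodule.map_comap_subtype, Submodule.finrank_map_subtype_eq]

theorem finrank_spanSubset_val_lt {n m : ℕ} (hm : m ≤ n) :
    finrank k (Pi.spanSubset k {j : Fin n | (j : ℕ) < m}) = m := by
  rw [Pi.dim_spanSubset, Set.ncard_eq_toFinset_card', Set.toFinset_ofPred, Fin.card_filter_val_lt,
    min_eq_right hm]

end Field

section Combinatorics

/-- The number `∑_{1 ≤ t ≤ M} min (λ_t) j`, where `λ` is the partition conjugate to `μ`: if no part
of `μ` exceeds `M`, this is the dimension of the kernel of the `j`-th power of a nilpotent
endomorphism of Jordan type `λ`. -/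
def jordanKerDim {ι : Type*} [Fintype ι] (μ : ι → ℕ) (M j : ℕ) : ℕ :=
  ∑ t ∈ Icc 1 M, min #{i | t ≤ μ i} j

/-- The partial sum `m_i = μ₀ + … + μ_{i-1}`, the dimension of the `i`-th step of a flag of
type `μ`. -/
def partialSum {s : ℕ} (μ : Fin s → ℕ) (i : ℕ) : ℕ :=
  ∑ j ∈ univ.filter fun j : Fin s => (j : ℕ) < i, μ j

/-- The number of proper inclusions in the initial part `W₀ ⊆ … ⊆ Wᵢ` of a flag of type `μ`. -/
def stepCount {s : ℕ} (μ : Fin s → ℕ) (i : ℕ) : ℕ := #{j : Fin s | (j : ℕ) < i ∧ 0 < μ j}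

theorem sum_sub_one_add_card_pos {ι : Type*} (μ : ι → ℕ) (S : Finset ι) :
    ∑ i ∈ S, (μ i - 1) + #{i ∈ S | 0 < μ i} = ∑ i ∈ S, μ i := by
  rw [card_filter, ← sum_add_distrib]
  refine sum_congr rfl fun i _ => ?_
  split_ifs <;> omega

section Conjugate

variable {ι : Type*} [Fintype ι] (μ : ι → ℕ) (M j : ℕ)

theorem jordanKerDim_succ :
    jordanKerDim μ (M + 1) j = min #{i | 0 < μ i} j + jordanKerDim (fun i => μ i - 1) M j := by
  have hcard (t : ℕ) (ht : t ∈ Icc 1 M) : #{i | t ≤ μ i - 1} = #{i | t + 1 ≤ μ i} := by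
    have := (mem_Icc.1 ht).1
    exact congrArg card (filter_congr fun i _ => by omega)
  rw [jordanKerDim, jordanKerDim, ← add_sum_Ioc_eq_sum_Icc (by omega), ← Icc_add_one_left_eq_Ioc,
    ← map_add_right_Icc, sum_map]
  exact congrArg _ (sum_congr rfl fun t ht => by rw [hcard t ht]; rfl)

theorem jordanKerDim_le_sum : jordanKerDim μ M j ≤ ∑ i, μ i := by
  induction M generalizing μ with
  | zero => simp [jordanKerDim]
  | succ M ih =>
    rw [jordanKerDim_succ, ← sum_sub_one_add_card_pos, add_comm]
    exact add_le_add (ih _) (min_le_left _ _)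

theorem jordanKerDim_lt_sum (hj : j < #{i | 0 < μ i}) : jordanKerDim μ (M + 1) j < ∑ i, μ i := by
  rw [jordanKerDim_succ, ← sum_sub_one_add_card_pos, add_comm]
  exact add_lt_add_of_le_of_lt (jordanKerDim_le_sum _ M j) ((min_le_right _ _).trans_lt hj)

end Conjugate

section Composition

variable {s : ℕ} (μ : Fin s → ℕ)

theorem stepCount_length : stepCount μ s = #{i | 0 < μ i} := by simp [stepCount]

theorem stepCount_mono : Monotone (stepCount μ) := fun _ _ hij =>
  card_le_card <| monotone_filter_right _ fun _ _ h => ⟨h.1.trans_le hij, h.2⟩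

theorem stepCount_le_length (i : ℕ) : stepCount μ i ≤ stepCount μ s :=
  card_le_card <| monotone_filter_right _ fun j _ h => ⟨j.2, h.2⟩

theorem stepCount_succ_le (i : ℕ) : stepCount μ (i + 1) ≤ stepCount μ i + 1 := by
  have hsub : (univ.filter fun j : Fin s => (j : ℕ) < i + 1 ∧ 0 < μ j) ⊆
      univ.filter (fun j : Fin s => (j : ℕ) < i ∧ 0 < μ j) ∪
        univ.filter (fun j : Fin s => (j : ℕ) = i) := by
    intro j
    simp only [mem_union, mem_filter_univ]
    intro hj
    omega
  have hone : #{j : Fin s | (j : ℕ) = i} ≤ 1 := card_le_one.2 fun j hj l hl => by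
    rw [mem_filter_univ] at hj hl
    omega
  exact (card_le_card hsub).trans ((card_union_le _ _).trans (Nat.add_le_add_left hone _))

theorem partialSum_mono : Monotone (partialSum μ) := fun _ _ hij =>
  sum_le_sum_of_subset <| monotone_filter_right _ fun _ _ h => h.trans_le hij

theorem partialSum_length : partialSum μ s = ∑ i, μ i := by simp [partialSum]

theorem partialSum_le_sum (i : ℕ) : partialSum μ i ≤ ∑ i, μ i :=
  sum_le_sum_of_subset (filter_subset _ _)

theorem partialSum_sub_one_add_stepCount (i : ℕ) :
    partialSum (fun j => μ j - 1) i + stepCount μ i = partialSum μ i := by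
  rw [partialSum, partialSum, stepCount, ← filter_filter, sum_sub_one_add_card_pos]

theorem partialSum_eq_of_stepCount_eq {i j : ℕ} (hij : i ≤ j) (h : stepCount μ i = stepCount μ j) :
    partialSum μ i = partialSum μ j := by
  have hfilter := eq_of_subset_of_card_le
    (monotone_filter_right univ fun (l : Fin s) _ (hl : (l : ℕ) < i ∧ 0 < μ l) =>
      (⟨hl.1.trans_le hij, hl.2⟩ : (l : ℕ) < j ∧ 0 < μ l)) h.ge
  simp only [← filter_filter, pos_iff_ne_zero] at hfilter
  rw [partialSum, partialSum, ← sum_filter_ne_zero, hfilter, sum_filter_ne_zero]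

end Composition

end Combinatorics

section Flag

variable {k V V' : Type*} [Field k] [AddCommGroup V] [Module k V]
  [AddCommGroup V'] [Module k V']
  {W : ℕ → Submodule k V} {W' : ℕ → Submodule k V'} {N : End k V} {N' : End k V'}
  {s M : ℕ} {μ : Fin s → ℕ}

/-- `W₀ ⊆ W₁ ⊆ … ⊆ W_s` is a flag of the whole space with graded pieces of dimensions
`μ 0, …, μ (s - 1)`, continued by `W i = ⊤` for `i > s`. Graded pieces may be zero. -/
structure IsFlagOfType (μ : Fin s → ℕ) (W : ℕ → Submodule k V) : Prop where
  mono : Monotone W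
  top : W s = ⊤
  finrank_eq : ∀ i, finrank k (W i) = partialSum μ i

/-- `N` lowers the flag `W` of type `μ` strictly, that is, `N` belongs to the nilradical of the
parabolic subalgebra stabilizing `W`. -/
structure IsStrictlyCompatible (μ : Fin s → ℕ) (W : ℕ → Submodule k V) (N : End k V) : Prop
    extends IsFlagOfType μ W where
  map_le : ∀ i, (W (i + 1)).map N ≤ W i

/-- `N` lowers the flag `W` of type `μ` strictly, and the kernels of its powers are no larger than
those of a Richardson nilpotent, whose Jordan type is the partition `λ` conjugate to `μ`. Only
the parts `λ_t` with `t ≤ M` are taken into account. -/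
structure IsRichardson (M : ℕ) (μ : Fin s → ℕ) (W : ℕ → Submodule k V) (N : End k V) : Prop
    extends IsStrictlyCompatible μ W N where
  finrank_ker_pow_le : ∀ j, finrank k (LinearMap.ker (N ^ j)) ≤ jordanKerDim μ M j

namespace IsFlagOfType

theorem eq_top_of_le (h : IsFlagOfType μ W) {i : ℕ} (hi : s ≤ i) : W i = ⊤ :=
  top_le_iff.1 (h.top ▸ h.mono hi)

theorem finrank_eq_sum (h : IsFlagOfType μ W) : finrank k V = ∑ i, μ i := by
  rw [← finrank_top, ← h.top, h.finrank_eq, partialSum_length]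

theorem isStrictlyCompatible (h : IsFlagOfType μ W)
    (hN : ∀ i, 1 ≤ i → i ≤ s → (W i).map N ≤ W (i - 1)) : IsStrictlyCompatible μ W N where
  toIsFlagOfType := h
  map_le i := by
    obtain hi | hi := lt_or_ge i s
    · exact hN (i + 1) (Nat.le_add_left 1 i) hi
    · exact le_top.trans_eq (h.eq_top_of_le hi).symm

theorem map_eq_of_map_le [FiniteDimensional k V'] (h : IsFlagOfType μ W) (h' : IsFlagOfType μ W')
    (g : V ≃ₗ[k] V') {i : ℕ} (hg : (W i).map g.toLinearMap ≤ W' i) :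
    (W i).map g.toLinearMap = W' i :=
  Submodule.eq_of_le_of_finrank_eq hg <| by
    rw [LinearEquiv.finrank_map_eq, h.finrank_eq, h'.finrank_eq]

variable [FiniteDimensional k V]

theorem zero_eq_bot (h : IsFlagOfType μ W) : W 0 = ⊥ :=
  Submodule.finrank_eq_zero.1 (by simp [h.finrank_eq, partialSum])

theorem eq_of_stepCount_eq (h : IsFlagOfType μ W) {i j : ℕ} (hij : i ≤ j)
    (hs : stepCount μ i = stepCount μ j) : W i = W j :=
  Submodule.eq_of_le_of_finrank_eq (h.mono hij) <| by
    rw [h.finrank_eq, h.finrank_eq, partialSum_eq_of_stepCount_eq μ hij hs]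

end IsFlagOfType

namespace IsStrictlyCompatible

variable [FiniteDimensional k V]

theorem pow_apply_mem (h : IsStrictlyCompatible μ W N) {a i j : ℕ}
    (hij : stepCount μ i ≤ stepCount μ j + a) : ∀ x ∈ W i, (N ^ a) x ∈ W j := by
  induction i generalizing a with
  | zero =>
    intro x hx
    rw [h.zero_eq_bot, Submodule.mem_bot] at hx
    simp [hx]
  | succ i ih =>
    intro x hx
    obtain hstep | hstep := (stepCount_mono μ (Nat.le_add_right i 1)).eq_or_lt
    · rw [← h.eq_of_stepCount_eq (Nat.le_add_right i 1) hstep] at hx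
      exact ih (hstep.trans_le hij) x hx
    cases a with
    | zero =>
      have hle : i + 1 ≤ j := (stepCount_mono μ).reflect_lt (hstep.trans_le hij)
      exact h.mono hle hx
    | succ a =>
      rw [pow_succ, End.mul_apply]
      have := stepCount_succ_le μ i
      exact ih (by omega) _ (h.map_le i (Submodule.mem_map_of_mem hx))

theorem pow_stepCount_apply (h : IsStrictlyCompatible μ W N) {i : ℕ} {x : V} (hx : x ∈ W i) :
    (N ^ stepCount μ i) x = 0 := by
  rw [← Submodule.mem_bot k, ← h.zero_eq_bot]
  exact h.pow_apply_mem (Nat.le_add_left _ _) x hx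

theorem pow_apply_mem_of_le (h : IsStrictlyCompatible μ W N) {a i : ℕ}
    (ha : stepCount μ s ≤ a + stepCount μ i) (x : V) : (N ^ a) x ∈ W i :=
  h.pow_apply_mem (add_comm a _ ▸ ha) x (h.top ▸ Submodule.mem_top)

theorem pow_eq_zero (h : IsStrictlyCompatible μ W N) : N ^ stepCount μ s = 0 :=
  LinearMap.ext fun _ => h.pow_stepCount_apply (h.top ▸ Submodule.mem_top)

theorem jordanChain_jordanCoord_mem [FiniteDimensional k V'] (h : IsStrictlyCompatible μ W N)
    (h' : IsStrictlyCompatible μ W' N') (φ : Dual k V) (v' : V') {i : ℕ} {x : V} (hx : x ∈ W i) :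
    jordanChain (stepCount μ s) N' v' (jordanCoord (stepCount μ s) N φ x) ∈ W' i :=
  jordanChain_mem (fun _ ha => h'.pow_apply_mem_of_le ha v')
    (jordanCoord_mem_spanSubset (h.pow_stepCount_apply hx))

end IsStrictlyCompatible

theorem IsDualChain.finrank_comap_ker_add [FiniteDimensional k V] {r a : ℕ} {φ : Dual k V} {v : V}
    (h : IsDualChain r N φ v) (ha : a ≤ r) {U : Submodule k V} (hU : ∀ x ∈ U, (N ^ a) x = 0)
    (hv : ∀ j, r ≤ j + a → (N ^ j) v ∈ U) :
    finrank k (U.comap (LinearMap.ker (jordanCoord r N φ)).subtype) + a = finrank k U := by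
  rw [← finrank_comap_ker_subtype_add_finrank_map (jordanCoord r N φ) U, h.map_jordanCoord hU hv,
    finrank_spanSubset_val_lt ha]

theorem IsDualChain.finrank_ker_restrict_pow_add [FiniteDimensional k V] {r : ℕ} {φ : Dual k V}
    {v : V} (h : IsDualChain r N φ v) (j : ℕ) :
    finrank k (LinearMap.ker (N.restrict h.apply_mem_ker_jordanCoord ^ j)) + min r j =
      finrank k (LinearMap.ker (N ^ j)) := by
  have hker : LinearMap.ker (N.restrict h.apply_mem_ker_jordanCoord ^ j) =
      (LinearMap.ker (N ^ j)).comap (LinearMap.ker (jordanCoord r N φ)).subtype := by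
    rw [End.pow_restrict, LinearMap.ker_restrict]
  rw [hker]
  refine h.finrank_comap_ker_add (min_le_left r j) (fun x hx => ?_) fun l hl => ?_
  · obtain hrj | hjr := le_total r j
    · simp [min_eq_left hrj, h.pow_eq_zero]
    · simpa [min_eq_right hjr] using hx
  · rw [LinearMap.mem_ker, ← End.mul_apply, ← pow_add, pow_eq_zero_of_le (by omega) h.pow_eq_zero,
      LinearMap.zero_apply]

namespace IsRichardson

variable [FiniteDimensional k V]

theorem exists_isDualChain (h : IsRichardson (M + 1) μ W N) :
    ∃ φ v, IsDualChain (stepCount μ s) N φ v := by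
  obtain hr | hr := Nat.eq_zero_or_pos (stepCount μ s)
  · exact ⟨0, 0, h.pow_eq_zero, fun j => by simp [hr]⟩
  suffices N ^ (stepCount μ s - 1) ≠ 0 by
    obtain ⟨v, hv⟩ := DFunLike.ne_iff.1 this
    obtain ⟨φ, hφ⟩ := _root_.exists_isDualChain h.pow_eq_zero hv
    exact ⟨φ, v, hφ⟩
  intro hzero
  have hle := h.finrank_ker_pow_le (stepCount μ s - 1)
  rw [hzero, LinearMap.ker_zero, finrank_top, h.finrank_eq_sum] at hle
  exact hle.not_gt (jordanKerDim_lt_sum μ M _ (by rw [← stepCount_length]; omega))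

theorem subsingleton (h : IsRichardson 0 μ W N) : Subsingleton V := by
  have hle := h.finrank_ker_pow_le (stepCount μ s)
  rw [h.pow_eq_zero, LinearMap.ker_zero, finrank_top] at hle
  exact finrank_zero_iff.1 (Nat.le_zero.1 hle)

theorem restrict (h : IsRichardson (M + 1) μ W N) {φ : Dual k V} {v : V}
    (hc : IsDualChain (stepCount μ s) N φ v) :
    IsRichardson M (fun i => μ i - 1)
      (fun i => (W i).comap (LinearMap.ker (jordanCoord (stepCount μ s) N φ)).subtype)
      (N.restrict hc.apply_mem_ker_jordanCoord) where
  mono _ _ hij := Submodule.comap_mono (h.mono hij)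
  top := by rw [h.top, Submodule.comap_top]
  finrank_eq i := by
    have hcodim := hc.finrank_comap_ker_add (stepCount_le_length μ i) (U := W i)
      (fun _ => h.pow_stepCount_apply) fun j hj => h.pow_apply_mem_of_le hj v
    rw [h.finrank_eq, ← partialSum_sub_one_add_stepCount] at hcodim
    exact Nat.add_right_cancel hcodim
  map_le i := Submodule.map_le_iff_le_comap.2 fun x hx =>
    h.map_le i (Submodule.mem_map_of_mem (f := N) hx)
  finrank_ker_pow_le j := by
    have hle := h.finrank_ker_pow_le j
    rw [jordanKerDim_succ, ← stepCount_length, ← hc.finrank_ker_restrict_pow_add, add_comm] at hle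
    exact Nat.le_of_add_le_add_left hle

end IsRichardson

theorem stmt_7_general [FiniteDimensional k V] [FiniteDimensional k V']
    (h : IsRichardson M μ W N) (h' : IsRichardson M μ W' N') :
    ∃ g : V ≃ₗ[k] V', (∀ i, (W i).map g.toLinearMap = W' i) ∧ ∀ v, N' v = g (N (g.symm v)) := by
  induction M generalizing V V' μ with
  | zero =>
    have := h.subsingleton
    have := h'.subsingleton
    exact ⟨0, fun i => Subsingleton.elim _ _, fun v => Subsingleton.elim _ _⟩
  | succ M ih =>
    obtain ⟨φ, v, hc⟩ := h.exists_isDualChain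
    obtain ⟨φ', v', hc'⟩ := h'.exists_isDualChain
    obtain ⟨e, heW, heN⟩ := ih (h.restrict hc) (h'.restrict hc')
    let g := glueKer hc.jordanCoord_comp_jordanChain hc'.jordanCoord_comp_jordanChain e
    have hgW (i : ℕ) : (W i).map g.toLinearMap ≤ W' i := Submodule.map_le_iff_le_comap.2 fun x hx =>
      glueKer_mem _ _ (fun _ => h.jordanChain_jordanCoord_mem h.toIsStrictlyCompatible φ v)
        (fun _ => h.jordanChain_jordanCoord_mem h'.toIsStrictlyCompatible φ v')
        (fun y hy => (heW i).le (Submodule.mem_map_of_mem hy)) hx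
    have hgN : ∀ x, g (N x) = N' (g x) :=
      glueKer_comm _ _ hc.apply_mem_ker_jordanCoord hc'.apply_mem_ker_jordanCoord
        (jordanChain_jordanCoord_apply hc.pow_eq_zero hc.pow_eq_zero)
        (jordanChain_jordanCoord_apply hc.pow_eq_zero hc'.pow_eq_zero)
        fun x => by rw [heN, e.symm_apply_apply]
    exact ⟨g, fun i => h.map_eq_of_map_le h'.toIsFlagOfType g (hgW i), fun x => by
      rw [hgN, g.apply_symm_apply]⟩

theorem isFlagOfType_spanSubset {n : ℕ} (hμ : ∑ i, μ i = n) :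
    IsFlagOfType μ fun i => Pi.spanSubset k {j : Fin n | (j : ℕ) < partialSum μ i} where
  mono _ _ hij := Submodule.span_mono <| Set.image_mono fun _ hl =>
    hl.trans_le (partialSum_mono μ hij)
  top := Submodule.eq_top_iff'.2 fun _ => Pi.mem_spanSubset_iff.2 fun j hj =>
    absurd (j.2.trans_eq (hμ.symm.trans (partialSum_length μ).symm)) hj
  finrank_eq i := finrank_spanSubset_val_lt (hμ ▸ partialSum_le_sum μ i)

end Flag

/-- Remark 2.7, `O_P ∩ n_P⁺` is a single `P`-orbit: two nilpotent endomorphisms of `kⁿ` of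
Jordan type the conjugate partition `λ` of `μ`, both strictly compatible with the standard
flag `W₀ ⊆ W₁ ⊆ … ⊆ W_s` of type `μ` (i.e. `N(Wᵢ) ⊆ W_{i-1}`), are conjugate by a linear
automorphism `g` preserving each `Wᵢ`. -/
theorem stmt_7 (k : Type*) [Field k] (n s : ℕ) (hn : 1 ≤ n)
    (μ : Fin s → ℕ) (hμpos : ∀ i, 0 < μ i) (hμsum : ∑ i, μ i = n)
    (mμ : ℕ → ℕ)
    (hmμ : ∀ i, mμ i = ∑ j ∈ Finset.univ.filter (fun j : Fin s => (j : ℕ) < i), μ j)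
    (lam : ℕ → ℕ)
    (hlam : ∀ t, lam t = (Finset.univ.filter (fun i : Fin s => t ≤ μ i)).card)
    (W : ℕ → Submodule k (Fin n → k))
    (hW : ∀ i, W i = Submodule.span k
      ((fun j : Fin n => (Pi.single j 1 : Fin n → k)) '' {j : Fin n | (j : ℕ) < mμ i}))
    (N N' : (Fin n → k) →ₗ[k] (Fin n → k))
    (hNnil : IsNilpotent N) (hN'nil : IsNilpotent N')
    (hNker : ∀ j : ℕ, Module.finrank k (LinearMap.ker (N ^ j))
      = ∑ t ∈ Finset.Icc 1 n, min (lam t) j)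
    (hN'ker : ∀ j : ℕ, Module.finrank k (LinearMap.ker (N' ^ j))
      = ∑ t ∈ Finset.Icc 1 n, min (lam t) j)
    (hNW : ∀ i, 1 ≤ i → i ≤ s → Submodule.map N (W i) ≤ W (i - 1))
    (hN'W : ∀ i, 1 ≤ i → i ≤ s → Submodule.map N' (W i) ≤ W (i - 1)) :
    ∃ g : (Fin n → k) ≃ₗ[k] (Fin n → k),
      (∀ i, i ≤ s → Submodule.map (g : (Fin n → k) →ₗ[k] (Fin n → k)) (W i) = W i) ∧
      ∀ v, N' v = g (N (g.symm v)) := by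
  obtain rfl : mμ = partialSum μ := funext hmμ
  obtain rfl : lam = fun t => #{i | t ≤ μ i} := funext hlam
  obtain rfl : W = fun i => Pi.spanSubset k {j : Fin n | (j : ℕ) < partialSum μ i} := by
    funext i
    rw [hW, Pi.spanSubset]
    congr
    ext j
    simp
  have hflag := isFlagOfType_spanSubset (k := k) hμsum
  obtain ⟨g, hgW, hgN⟩ := stmt_7_general (N := N) (N' := N') (M := n)
    ⟨hflag.isStrictlyCompatible hNW, fun j => (hNker j).le⟩
    ⟨hflag.isStrictlyCompatible hN'W, fun j => (hN'ker j).le⟩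
  exact ⟨g, fun i _ => hgW i, hgN⟩
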